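/- Call a pair (γ,δ) ∈ [N]×[T] admissible if (α,β,γ,δ) ∈ 𝔛 for some α ∈ [N], β ∈ [M]. Let γ₀ > 0 and let μ̄ be a probability distribution on 𝔛. Suppose matrices W_χ ∈ ℝ^{ℓ×ℓ} (symmetric), R_χ ∈ ℝ^{n×n} (symmetric), G_{γ,δ} ∈ ℝ^{n×n}, and F_{γ,δ} ∈ ℝ^{m×n} satisfy, for every χ = (α,β,γ,δ) ∈ 𝔛: the symmetric block matrix [[R_χ − μ̄(χ) E_α E_αᵀ, A_α G_{γ,δ} + B_α F_{γ,δ}],[(A_α G_{γ,δ} + B_α F_{γ,δ})ᵀ, G_{γ,δ} + G_{γ,δ}ᵀ − D̄_χ(R)]] is positive definite; the symmetric block matrix [[W_χ, C_α G_{γ,δ} + D_α F_{γ,δ}],[(C_α G_{γ,δ} + D_α F_{γ,δ})ᵀ, G_{γ,δ} + G_{γ,δ}ᵀ − D̄_χ(R)]] is positive definite; and Σ_{χ∈𝔛} tr(W_χ) < γ₀. Then G_{γ,δ} is invertible for every admissible (γ,δ), and if the feedback gains satisfy K_{γ,δ} = F_{γ,δ} G_{γ,δ}⁻¹ for every admissible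 (γ,δ), then there exist symmetric positive definite matrices Q_χ ∈ ℝ^{n×n} (χ ∈ 𝔛) such that Σ_{χ∈𝔛} tr(C_{K,χ} Q_χ C_{K,χ}ᵀ) < γ₀ and Q_χ − D̄_χ(A_K Q A_Kᵀ + μ̄ E_K E_Kᵀ) is positive definite for every χ ∈ 𝔛, where (A_K Q A_Kᵀ)_χ = A_{K,χ} Q_χ A_{K,χ}ᵀ and (μ̄ E_K E_Kᵀ)_χ = μ̄(χ) E_{K,χ} E_{K,χ}ᵀ. -/

import Mathlib

open MeasureTheory ProbabilityTheory Matrix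

noncomputable section

/-- The state space `[N] × [M] × [N] × [T]` of the extended process `r̄`.
`Fin N`, `Fin M`, `Fin T` play the roles of `[N] = {1,…,N}`, `[M]`, `[T]`
(with `Fin T` being the 0-indexed version of `[T] = {1,…,T}`, i.e. `δ ∈ [T]`
corresponds to `δ - 1 : Fin T`). -/
abbrev XT (NN MM T : ℕ) : Type := Fin NN × Fin MM × Fin NN × Fin T

/-- `X` is a time-homogeneous Markov chain with transition probability matrix `P`:
for every `k`, every state `j` and every sequence of states `i`,
`Pr(X(k+1) = j ∧ X(l) = i l for all l ≤ k) = P (i k) j * Pr(X(l) = i l for all l ≤ k)`. -/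
def IsMarkovChain {Ω : Type} {_mΩ : MeasurableSpace Ω} (μ : Measure Ω) {S : Type}
    (X : ℕ → Ω → S) (P : S → S → ℝ) : Prop :=
  ∀ (k : ℕ) (j : S) (i : ℕ → S),
    (μ {ω | X (k + 1) ω = j ∧ ∀ l ≤ k, X l ω = i l}).toReal
      = P (i k) j * (μ {ω | ∀ l ≤ k, X l ω = i l}).toReal

/-- `⌊m⌋_T`, the unique element of `{0,…,T-1}` congruent to `m` modulo `T`, as `Fin T`. -/
def intToFin (T : ℕ) [NeZero T] (a : ℤ) : Fin T :=
  ⟨(a % (T : ℤ)).toNat, by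
    have hT : 0 < (T : ℤ) := by
      exact_mod_cast Nat.pos_of_ne_zero (NeZero.ne T)
    have h1 : 0 ≤ a % (T : ℤ) := Int.emod_nonneg a (by omega)
    have h2 : a % (T : ℤ) < (T : ℤ) := Int.emod_lt_of_pos a hT
    omega⟩

-- `τ(k)`: the most recent observation time `≤ k` (i.e. the largest `j ≤ k` with
-- `f(s(j)) = 1`), or `τ₀` if no observation has occurred up to time `k` (`k < t₀`).
open Classical in
def tauZ {Ω : Type} {MM : ℕ} (s : ℕ → Ω → Fin MM) (f : Fin MM → Bool)
    (τ₀ : ℤ) (k : ℕ) (ω : Ω) : ℤ :=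
  if ∃ j ≤ k, f (s j ω) = true
  then ((Nat.findGreatest (fun j => f (s j ω) = true) k : ℕ) : ℤ)
  else τ₀

-- `σ(k) = r(τ(k))` if an observation occurred by time `k` (i.e. `k ≥ t₀`), else `σ₀`.
open Classical in
def sigmaProc {Ω : Type} {NN MM : ℕ} (r : ℕ → Ω → Fin NN) (s : ℕ → Ω → Fin MM)
    (f : Fin MM → Bool) (σ₀ : Fin NN) (k : ℕ) (ω : Ω) : Fin NN :=
  if ∃ j ≤ k, f (s j ω) = true
  then r (Nat.findGreatest (fun j => f (s j ω) = true) k) ω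
  else σ₀

/-- `ρ(k) = ⌊k - τ(k)⌋_T + 1 ∈ [T]`, represented 0-indexed as `⌊k - τ(k)⌋_T : Fin T`. -/
def rhoProc {Ω : Type} {MM T : ℕ} [NeZero T] (s : ℕ → Ω → Fin MM) (f : Fin MM → Bool)
    (τ₀ : ℤ) (k : ℕ) (ω : Ω) : Fin T :=
  intToFin T ((k : ℤ) - tauZ s f τ₀ k ω)

/-- The extended process `r̄(k) = (r(k), s(k), σ(k), ρ(k))`. -/
def rbarProc {Ω : Type} {NN MM T : ℕ} [NeZero T] (r : ℕ → Ω → Fin NN)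
    (s : ℕ → Ω → Fin MM) (f : Fin MM → Bool) (τ₀ : ℤ) (σ₀ : Fin NN)
    (k : ℕ) (ω : Ω) : XT NN MM T :=
  (r k ω, s k ω, sigmaProc r s f σ₀ k ω, rhoProc s f τ₀ k ω)

/-- Membership in `𝔛`: if `f(β) = 1` then `α = γ` and `δ = 1` (0-indexed: `δ = 0`). -/
def inX {NN MM T : ℕ} [NeZero T] (f : Fin MM → Bool) (χ : XT NN MM T) : Prop :=
  f χ.2.1 = true → χ.1 = χ.2.2.1 ∧ χ.2.2.2 = 0

/-- The transition probabilities `p̄_{χχ'}` of the extended chain. The condition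
`⌊δ' - δ - 1⌋_T = 0` for `δ, δ' ∈ [T]` is, in 0-indexed form, `δ' = δ + 1` in `Fin T`. -/
def pbar {NN MM T : ℕ} [NeZero T] (P : Matrix (Fin NN) (Fin NN) ℝ)
    (Q : Matrix (Fin MM) (Fin MM) ℝ) (f : Fin MM → Bool) (χ χ' : XT NN MM T) : ℝ :=
  (if f χ'.2.1 = true
    then (if χ'.1 = χ'.2.2.1 ∧ χ'.2.2.2 = 0 then (1 : ℝ) else 0)
    else (if χ'.2.2.1 = χ.2.2.1 ∧ χ'.2.2.2 = χ.2.2.2 + 1 then (1 : ℝ) else 0))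
  * P χ.1 χ'.1 * Q χ.2.1 χ'.2.1

/-- The state trajectory of the closed-loop system
`x(k+1) = A(mode(k)) x(k) + E(mode(k)) w(k)`, `x(0) = x₀`. -/
def traj {Ω S : Type} {n q : ℕ}
    (Amat : S → Matrix (Fin n) (Fin n) ℝ) (Emat : S → Matrix (Fin n) (Fin q) ℝ)
    (mode : ℕ → Ω → S) (w : ℕ → Ω → Fin q → ℝ) (x0 : Fin n → ℝ) : ℕ → Ω → Fin n → ℝ
  | 0, _ => x0
  | (k + 1), ω =>
      (Amat (mode k ω)).mulVec (traj Amat Emat mode w x0 k ω)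
        + (Emat (mode k ω)).mulVec (w k ω)

/-- `A_{K,χ} = A_α + B_α K_{γ,δ}`. -/
def AKmat {NN MM T n m : ℕ} (A : Fin NN → Matrix (Fin n) (Fin n) ℝ)
    (B : Fin NN → Matrix (Fin n) (Fin m) ℝ)
    (K : Fin NN → Fin T → Matrix (Fin m) (Fin n) ℝ) (χ : XT NN MM T) :
    Matrix (Fin n) (Fin n) ℝ :=
  A χ.1 + B χ.1 * K χ.2.2.1 χ.2.2.2

/-- `C_{K,χ} = C_α + D_α K_{γ,δ}`. -/
def CKmat {NN MM T n m ℓ : ℕ} (C : Fin NN → Matrix (Fin ℓ) (Fin n) ℝ)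
    (D : Fin NN → Matrix (Fin ℓ) (Fin m) ℝ)
    (K : Fin NN → Fin T → Matrix (Fin m) (Fin n) ℝ) (χ : XT NN MM T) :
    Matrix (Fin ℓ) (Fin n) ℝ :=
  C χ.1 + D χ.1 * K χ.2.2.1 χ.2.2.2

/-- Squared Euclidean norm of a vector, as an extended nonnegative real. -/
def sqE {d : ℕ} (v : Fin d → ℝ) : ENNReal := ENNReal.ofReal (∑ i, (v i) ^ 2)

-- The operator `D̄_χ(R) = ∑_{χ' ∈ 𝔛} p̄_{χ'χ} R_{χ'}`.
open Classical in
def Dop {NN MM T n : ℕ} [NeZero T] (P : Matrix (Fin NN) (Fin NN) ℝ)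
    (Q : Matrix (Fin MM) (Fin MM) ℝ) (f : Fin MM → Bool)
    (R : XT NN MM T → Matrix (Fin n) (Fin n) ℝ) (χ : XT NN MM T) :
    Matrix (Fin n) (Fin n) ℝ :=
  ∑ χ' : XT NN MM T, if inX f χ' then pbar P Q f χ' χ • R χ' else 0

-- The operator `F̄_χ(Z) = ∑_{χ' ∈ 𝔛} p̄_{χχ'} Z_{χ,χ'}`.
open Classical in
def Fop {NN MM T n : ℕ} [NeZero T] (P : Matrix (Fin NN) (Fin NN) ℝ)
    (Q : Matrix (Fin MM) (Fin MM) ℝ) (f : Fin MM → Bool)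
    (Z : XT NN MM T → XT NN MM T → Matrix (Fin n) (Fin n) ℝ) (χ : XT NN MM T) :
    Matrix (Fin n) (Fin n) ℝ :=
  ∑ χ' : XT NN MM T, if inX f χ' then pbar P Q f χ χ' • Z χ χ' else 0

/-- A pair `(γ,δ) ∈ [N] × [T]` is admissible if `(α,β,γ,δ) ∈ 𝔛` for some `α, β`. -/
def Admissible {NN MM T : ℕ} [NeZero T] (f : Fin MM → Bool) (g : Fin NN) (d : Fin T) : Prop :=
  ∃ (α : Fin NN) (β : Fin MM), inX (T := T) f (α, β, g, d)

/-- A realization, on some probability space, of the pair of independent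
time-homogeneous Markov chains `(r, s)` with transition matrices `P` and `Q`. -/
structure MJLSReal (NN MM : ℕ) (P : Matrix (Fin NN) (Fin NN) ℝ)
    (Q : Matrix (Fin MM) (Fin MM) ℝ) : Type 1 where
  Ω : Type
  inst : MeasurableSpace Ω
  μ : @Measure Ω inst
  prob : IsProbabilityMeasure μ
  r : ℕ → Ω → Fin NN
  s : ℕ → Ω → Fin MM
  meas_r : ∀ k, Measurable[inst] (r k)
  meas_s : ∀ k, Measurable[inst] (s k)
  markov_r : IsMarkovChain μ r fun i j => P i j
  markov_s : IsMarkovChain μ s fun i j => Q i j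
  indep : IndepFun (fun ω l => r l ω) (fun ω l => s l ω) μ

/-- A realization, on some probability space, of a time-homogeneous Markov chain `θ`
taking values in `𝔛` with transition probabilities `p̄`. -/
structure ThetaReal (NN MM T : ℕ) [NeZero T] (P : Matrix (Fin NN) (Fin NN) ℝ)
    (Q : Matrix (Fin MM) (Fin MM) ℝ) (f : Fin MM → Bool) : Type 1 where
  Ω : Type
  inst : MeasurableSpace Ω
  μ : @Measure Ω inst
  prob : IsProbabilityMeasure μ
  θ : ℕ → Ω → XT NN MM T
  meas : ∀ k, Measurable[inst] (θ k)
  mem : ∀ k ω, inX f (θ k ω)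
  markov : IsMarkovChain μ θ (pbar P Q f)

/-- Mean square stability of the closed-loop system `Σ_K`: there are `c > 0` and
`λ ∈ [0,1)` such that for every realization, every deterministic initialization
(`r(0) = r₀`, `s(0) = s₀` a.s., together with `σ₀` and `τ₀ ≤ 0`, so that `r̄(0)`
is a deterministic element of `𝔛`), every `x₀` and every `k`,
`E[‖x(k)‖²] ≤ c λ^k ‖x₀‖²` (with `w ≡ 0`). -/
def MeanSquareStable {NN MM T n m q : ℕ} [NeZero T]
    (P : Matrix (Fin NN) (Fin NN) ℝ) (Qm : Matrix (Fin MM) (Fin MM) ℝ) (f : Fin MM → Bool)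
    (A : Fin NN → Matrix (Fin n) (Fin n) ℝ) (B : Fin NN → Matrix (Fin n) (Fin m) ℝ)
    (E : Fin NN → Matrix (Fin n) (Fin q) ℝ)
    (K : Fin NN → Fin T → Matrix (Fin m) (Fin n) ℝ) : Prop :=
  ∃ c : ℝ, 0 < c ∧ ∃ lam : ℝ, 0 ≤ lam ∧ lam < 1 ∧
    ∀ (S : MJLSReal NN MM P Qm) (τ₀ : ℤ), τ₀ ≤ 0 →
      ∀ (σ₀ r₀ : Fin NN) (s₀ : Fin MM),
        (∀ᵐ ω ∂S.μ, S.r 0 ω = r₀ ∧ S.s 0 ω = s₀) →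
        ∀ (x0 : Fin n → ℝ) (k : ℕ),
          (∫⁻ ω, sqE (traj (AKmat A B K) (fun χ => E χ.1)
              (rbarProc S.r S.s f τ₀ σ₀) (fun _ _ => 0) x0 k ω) ∂S.μ)
            ≤ ENNReal.ofReal (c * lam ^ k * ∑ i, (x0 i) ^ 2)

/-- Mean square stability of `Σ̄_K` (the system driven by the chain `θ`). -/
def MeanSquareStableBar {NN MM T n m q : ℕ} [NeZero T]
    (P : Matrix (Fin NN) (Fin NN) ℝ) (Qm : Matrix (Fin MM) (Fin MM) ℝ) (f : Fin MM → Bool)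
    (A : Fin NN → Matrix (Fin n) (Fin n) ℝ) (B : Fin NN → Matrix (Fin n) (Fin m) ℝ)
    (E : Fin NN → Matrix (Fin n) (Fin q) ℝ)
    (K : Fin NN → Fin T → Matrix (Fin m) (Fin n) ℝ) : Prop :=
  ∃ c : ℝ, 0 < c ∧ ∃ lam : ℝ, 0 ≤ lam ∧ lam < 1 ∧
    ∀ (S : ThetaReal NN MM T P Qm f) (χ : XT NN MM T), inX f χ →
      (∀ᵐ ω ∂S.μ, S.θ 0 ω = χ) →
      ∀ (x0 : Fin n → ℝ) (k : ℕ),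
        (∫⁻ ω, sqE (traj (AKmat A B K) (fun χ' => E χ'.1) S.θ (fun _ _ => 0) x0 k ω) ∂S.μ)
          ≤ ENNReal.ofReal (c * lam ^ k * ∑ i, (x0 i) ^ 2)

/-- The impulse disturbance `w = e_i φ`, i.e. `w(0) = e_i` and `w(k) = 0` for `k ≥ 1`. -/
def impulse {Ω : Type} (q : ℕ) (i : Fin q) : ℕ → Ω → Fin q → ℝ :=
  fun k _ j => if k = 0 ∧ j = i then 1 else 0

/-- `∑_k E[‖z(k; 0, χ, e_i φ)‖²]` for `Σ_K` on a given realization with data `(τ₀, σ₀)`. -/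
def H2TermSigma {NN MM T n m q ℓ : ℕ} [NeZero T]
    {P : Matrix (Fin NN) (Fin NN) ℝ} {Qm : Matrix (Fin MM) (Fin MM) ℝ}
    (S : MJLSReal NN MM P Qm) (f : Fin MM → Bool) (τ₀ : ℤ) (σ₀ : Fin NN)
    (A : Fin NN → Matrix (Fin n) (Fin n) ℝ) (B : Fin NN → Matrix (Fin n) (Fin m) ℝ)
    (C : Fin NN → Matrix (Fin ℓ) (Fin n) ℝ) (D : Fin NN → Matrix (Fin ℓ) (Fin m) ℝ)
    (E : Fin NN → Matrix (Fin n) (Fin q) ℝ)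
    (K : Fin NN → Fin T → Matrix (Fin m) (Fin n) ℝ) (i : Fin q) : ENNReal :=
  ∑' k : ℕ, ∫⁻ ω, sqE ((CKmat C D K (rbarProc S.r S.s f τ₀ σ₀ k ω)).mulVec
      (traj (AKmat A B K) (fun χ => E χ.1) (rbarProc S.r S.s f τ₀ σ₀)
        (impulse q i) 0 k ω)) ∂S.μ

-- `‖Σ_K‖₂² < γ`, where `‖Σ_K‖₂² = ∑_{i=1}^q ∑_{χ ∈ 𝔛} μ̄(χ) ‖z(⬝;0,χ,e_iφ)‖₂²` and the
-- expectations are over arbitrary realizations with deterministic initialization `r̄(0) = χ`.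
open Classical in
def H2SqLtSigma {NN MM T n m q ℓ : ℕ} [NeZero T]
    (P : Matrix (Fin NN) (Fin NN) ℝ) (Qm : Matrix (Fin MM) (Fin MM) ℝ) (f : Fin MM → Bool)
    (A : Fin NN → Matrix (Fin n) (Fin n) ℝ) (B : Fin NN → Matrix (Fin n) (Fin m) ℝ)
    (C : Fin NN → Matrix (Fin ℓ) (Fin n) ℝ) (D : Fin NN → Matrix (Fin ℓ) (Fin m) ℝ)
    (E : Fin NN → Matrix (Fin n) (Fin q) ℝ)
    (K : Fin NN → Fin T → Matrix (Fin m) (Fin n) ℝ)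
    (μbar : XT NN MM T → ℝ) (γ : ℝ) : Prop :=
  ∀ (S : Fin q → XT NN MM T → MJLSReal NN MM P Qm)
    (τ : Fin q → XT NN MM T → ℤ) (σv : Fin q → XT NN MM T → Fin NN),
    (∀ i χ, inX f χ → τ i χ ≤ 0 ∧
        (∀ᵐ ω ∂(S i χ).μ, rbarProc (S i χ).r (S i χ).s f (τ i χ) (σv i χ) 0 ω = χ)) →
    (∑ i : Fin q, ∑ χ : XT NN MM T,
        if inX f χ
        then ENNReal.ofReal (μbar χ) * H2TermSigma (S i χ) f (τ i χ) (σv i χ) A B C D E K i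
        else 0)
      < ENNReal.ofReal γ

/-- `∑_k E[‖z̄(k; 0, χ, e_i φ)‖²]` for `Σ̄_K` on a given realization of `θ`. -/
def H2TermBar {NN MM T n m q ℓ : ℕ} [NeZero T]
    {P : Matrix (Fin NN) (Fin NN) ℝ} {Qm : Matrix (Fin MM) (Fin MM) ℝ} {f : Fin MM → Bool}
    (S : ThetaReal NN MM T P Qm f)
    (A : Fin NN → Matrix (Fin n) (Fin n) ℝ) (B : Fin NN → Matrix (Fin n) (Fin m) ℝ)
    (C : Fin NN → Matrix (Fin ℓ) (Fin n) ℝ) (D : Fin NN → Matrix (Fin ℓ) (Fin m) ℝ)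
    (E : Fin NN → Matrix (Fin n) (Fin q) ℝ)
    (K : Fin NN → Fin T → Matrix (Fin m) (Fin n) ℝ) (i : Fin q) : ENNReal :=
  ∑' k : ℕ, ∫⁻ ω, sqE ((CKmat C D K (S.θ k ω)).mulVec
      (traj (AKmat A B K) (fun χ => E χ.1) S.θ (impulse q i) 0 k ω)) ∂S.μ

-- `‖Σ̄_K‖₂² < γ` (the `H₂` norm of `Σ̄_K`, defined with `θ` in place of `r̄`).
open Classical in
def H2SqLtBar {NN MM T n m q ℓ : ℕ} [NeZero T]
    (P : Matrix (Fin NN) (Fin NN) ℝ) (Qm : Matrix (Fin MM) (Fin MM) ℝ) (f : Fin MM → Bool)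
    (A : Fin NN → Matrix (Fin n) (Fin n) ℝ) (B : Fin NN → Matrix (Fin n) (Fin m) ℝ)
    (C : Fin NN → Matrix (Fin ℓ) (Fin n) ℝ) (D : Fin NN → Matrix (Fin ℓ) (Fin m) ℝ)
    (E : Fin NN → Matrix (Fin n) (Fin q) ℝ)
    (K : Fin NN → Fin T → Matrix (Fin m) (Fin n) ℝ)
    (μbar : XT NN MM T → ℝ) (γ : ℝ) : Prop :=
  ∀ (S : Fin q → XT NN MM T → ThetaReal NN MM T P Qm f),
    (∀ i χ, inX f χ → (∀ᵐ ω ∂(S i χ).μ, (S i χ).θ 0 ω = χ)) →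
    (∑ i : Fin q, ∑ χ : XT NN MM T,
        if inX f χ
        then ENNReal.ofReal (μbar χ) * H2TermBar (S i χ) A B C D E K i
        else 0)
      < ENNReal.ofReal γ

/-- The σ-algebra `Θ_k` generated by `r(0), s(0), …, r(k), s(k)`, for a realization. -/
def sigFiltSigma {NN MM : ℕ} {P : Matrix (Fin NN) (Fin NN) ℝ}
    {Q : Matrix (Fin MM) (Fin MM) ℝ} (S : MJLSReal NN MM P Q) (k : ℕ) :
    MeasurableSpace S.Ω :=
  ⨆ j ∈ Finset.range (k + 1),
    (MeasurableSpace.comap (S.r j) inferInstance ⊔ MeasurableSpace.comap (S.s j) inferInstance)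

/-- The σ-algebra generated by `θ(0), …, θ(k)`, for a realization of `θ`. -/
def sigFiltBar {NN MM T : ℕ} [NeZero T] {P : Matrix (Fin NN) (Fin NN) ℝ}
    {Q : Matrix (Fin MM) (Fin MM) ℝ} {f : Fin MM → Bool} (S : ThetaReal NN MM T P Q f)
    (k : ℕ) : MeasurableSpace S.Ω :=
  ⨆ j ∈ Finset.range (k + 1), MeasurableSpace.comap (S.θ j) inferInstance

/-- `Σ_K` satisfies `‖Σ_K‖∞² < γ`: there is `0 ≤ c < γ` such that `‖z‖₂² ≤ c ‖w‖₂²`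
for every realization, every deterministic initialization `r̄(0) = r̄₀ ∈ 𝔛`, and
every nonzero `w ∈ ℓ²(ℝ^q)` adapted to `(Θ_k)_k` (with `x₀ = 0`). -/
def HinfSqLtSigma {NN MM T n m q ℓ : ℕ} [NeZero T]
    (P : Matrix (Fin NN) (Fin NN) ℝ) (Qm : Matrix (Fin MM) (Fin MM) ℝ) (f : Fin MM → Bool)
    (A : Fin NN → Matrix (Fin n) (Fin n) ℝ) (B : Fin NN → Matrix (Fin n) (Fin m) ℝ)
    (C : Fin NN → Matrix (Fin ℓ) (Fin n) ℝ) (D : Fin NN → Matrix (Fin ℓ) (Fin m) ℝ)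
    (E : Fin NN → Matrix (Fin n) (Fin q) ℝ)
    (K : Fin NN → Fin T → Matrix (Fin m) (Fin n) ℝ) (γ : ℝ) : Prop :=
  ∃ c : ℝ, 0 ≤ c ∧ c < γ ∧
    ∀ (S : MJLSReal NN MM P Qm) (τ₀ : ℤ), τ₀ ≤ 0 → ∀ (σ₀ : Fin NN) (χ : XT NN MM T),
      inX f χ → (∀ᵐ ω ∂S.μ, rbarProc S.r S.s f τ₀ σ₀ 0 ω = χ) →
      ∀ (w : ℕ → S.Ω → Fin q → ℝ),
        (∀ k, Measurable[sigFiltSigma S k] (w k)) →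
        0 < (∑' k : ℕ, ∫⁻ ω, sqE (w k ω) ∂S.μ) →
        (∑' k : ℕ, ∫⁻ ω, sqE (w k ω) ∂S.μ) ≠ ⊤ →
        (∑' k : ℕ, ∫⁻ ω, sqE ((CKmat C D K (rbarProc S.r S.s f τ₀ σ₀ k ω)).mulVec
            (traj (AKmat A B K) (fun χ' => E χ'.1) (rbarProc S.r S.s f τ₀ σ₀) w 0 k ω)) ∂S.μ)
          ≤ ENNReal.ofReal c * (∑' k : ℕ, ∫⁻ ω, sqE (w k ω) ∂S.μ)

/-- `Σ̄_K` satisfies `‖Σ̄_K‖∞² < γ` (disturbances adapted to the filtration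
generated by `θ`). -/
def HinfSqLtBar {NN MM T n m q ℓ : ℕ} [NeZero T]
    (P : Matrix (Fin NN) (Fin NN) ℝ) (Qm : Matrix (Fin MM) (Fin MM) ℝ) (f : Fin MM → Bool)
    (A : Fin NN → Matrix (Fin n) (Fin n) ℝ) (B : Fin NN → Matrix (Fin n) (Fin m) ℝ)
    (C : Fin NN → Matrix (Fin ℓ) (Fin n) ℝ) (D : Fin NN → Matrix (Fin ℓ) (Fin m) ℝ)
    (E : Fin NN → Matrix (Fin n) (Fin q) ℝ)
    (K : Fin NN → Fin T → Matrix (Fin m) (Fin n) ℝ) (γ : ℝ) : Prop :=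
  ∃ c : ℝ, 0 ≤ c ∧ c < γ ∧
    ∀ (S : ThetaReal NN MM T P Qm f) (χ : XT NN MM T),
      inX f χ → (∀ᵐ ω ∂S.μ, S.θ 0 ω = χ) →
      ∀ (w : ℕ → S.Ω → Fin q → ℝ),
        (∀ k, Measurable[sigFiltBar S k] (w k)) →
        0 < (∑' k : ℕ, ∫⁻ ω, sqE (w k ω) ∂S.μ) →
        (∑' k : ℕ, ∫⁻ ω, sqE (w k ω) ∂S.μ) ≠ ⊤ →
        (∑' k : ℕ, ∫⁻ ω, sqE ((CKmat C D K (S.θ k ω)).mulVec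
            (traj (AKmat A B K) (fun χ' => E χ'.1) S.θ w 0 k ω)) ∂S.μ)
          ≤ ENNReal.ofReal c * (∑' k : ℕ, ∫⁻ ω, sqE (w k ω) ∂S.μ)

/-- The symmetric 4×4 block matrix appearing in the `H∞` LMI, with diagonal blocks
`D1, γ I_q, D3, I_ℓ`, sub-diagonal blocks `(3,1) = B31`, `(3,2) = B32`, `(4,1) = B41`,
the corresponding transposed blocks above the diagonal, and zeros elsewhere. -/
def hinfBlock {n q ℓ : ℕ} (γ : ℝ) (D1 D3 : Matrix (Fin n) (Fin n) ℝ)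
    (B31 : Matrix (Fin n) (Fin n) ℝ) (B32 : Matrix (Fin n) (Fin q) ℝ)
    (B41 : Matrix (Fin ℓ) (Fin n) ℝ) :
    Matrix ((Fin n ⊕ Fin q) ⊕ (Fin n ⊕ Fin ℓ)) ((Fin n ⊕ Fin q) ⊕ (Fin n ⊕ Fin ℓ)) ℝ :=
  Matrix.fromBlocks
    (Matrix.fromBlocks D1 0 0 (γ • (1 : Matrix (Fin q) (Fin q) ℝ)))
    (Matrix.fromBlocks B31ᵀ B41ᵀ B32ᵀ 0)
    (Matrix.fromBlocks B31 B32 B41 0)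
    (Matrix.fromBlocks D3 0 0 (1 : Matrix (Fin ℓ) (Fin ℓ) ℝ))

lemma posDef_shift {k : Type} [Fintype k] [DecidableEq k] {Z : Matrix k k ℝ} (hZ : Z.PosDef) :
    ∃ d : ℝ, 0 < d ∧ (Z - d • (1 : Matrix k k ℝ)).PosSemidef := by
  cases isEmpty_or_nonempty k with
  | inl h =>
    refine ⟨1, one_pos, ?_⟩
    rw [Subsingleton.elim (Z - (1:ℝ) • (1 : Matrix k k ℝ)) 0]
    exact Matrix.PosSemidef.zero
  | inr h =>
    obtain ⟨i, hi⟩ := Finite.exists_min hZ.isHermitian.eigenvalues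
    refine ⟨hZ.isHermitian.eigenvalues i, hZ.eigenvalues_pos i, ?_⟩
    open scoped MatrixOrder in
    have := algebraMap_le_of_le_spectrum (R := ℝ) (a := Z)
      (r := hZ.isHermitian.eigenvalues i) (by
        intro x hx
        rw [hZ.isHermitian.spectrum_real_eq_range_eigenvalues] at hx
        obtain ⟨j, rfl⟩ := hx
        exact hi j) hZ.isHermitian
    rw [Matrix.le_iff] at this
    simpa [Algebra.algebraMap_eq_smul_one] using this

lemma schur_key {k n : ℕ} (X : Matrix (Fin k) (Fin k) ℝ) (G S : Matrix (Fin n) (Fin n) ℝ)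
    (A : Matrix (Fin k) (Fin n) ℝ) (d ε : ℝ) (hd : 0 ≤ d) (hε : ε ≤ d)
    (h : (Matrix.fromBlocks X (A * G) (A * G)ᵀ (G + Gᵀ - S)
      - d • (1 : Matrix (Fin k ⊕ Fin n) (Fin k ⊕ Fin n) ℝ)).PosSemidef) :
    (X - A * (S + ε • (1 : Matrix (Fin n) (Fin n) ℝ)) * Aᵀ).PosSemidef := by
  have h1 := h.mul_mul_conjTranspose_same (Matrix.fromCols (1 : Matrix (Fin k) (Fin k) ℝ) (-A))
  have h2 : (d • (1 : Matrix (Fin k) (Fin k) ℝ)).PosSemidef := Matrix.PosSemidef.one.smul hd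
  have h3 : ((d - ε) • (A * Aᴴ)).PosSemidef :=
    (Matrix.posSemidef_self_mul_conjTranspose A).smul (sub_nonneg.2 hε)
  convert (h1.add h2).add h3 using 1
  rw [← Matrix.fromBlocks_one, Matrix.fromBlocks_smul, sub_eq_add_neg (Matrix.fromBlocks _ _ _ _),
    Matrix.fromBlocks_neg, Matrix.fromBlocks_add,
    ← Matrix.fromRows_fromCols_eq_fromBlocks, Matrix.fromCols_mul_fromRows,
    Matrix.conjTranspose_fromCols_eq_fromRows_conjTranspose, Matrix.add_mul]
  simp only [Matrix.conjTranspose_eq_transpose_of_trivial, Matrix.transpose_one,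
    Matrix.mul_fromCols, Matrix.fromCols_mul_fromRows, Matrix.transpose_neg, Matrix.transpose_mul,
    Matrix.one_mul, Matrix.mul_one]
  simp only [Matrix.mul_add, Matrix.add_mul, Matrix.mul_sub, Matrix.sub_mul, Matrix.neg_mul,
    Matrix.mul_neg, Matrix.mul_assoc, smul_zero, neg_zero, add_zero, neg_neg, Matrix.mul_smul,
    Matrix.smul_mul, Matrix.mul_one, Matrix.one_mul, sub_smul]
  module

lemma pbar_nonneg {NN MM T : ℕ} [NeZero T] (P : Matrix (Fin NN) (Fin NN) ℝ)
    (Q : Matrix (Fin MM) (Fin MM) ℝ) (hP0 : ∀ i j, 0 ≤ P i j) (hQ0 : ∀ i j, 0 ≤ Q i j)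
    (f : Fin MM → Bool) (χ χ' : XT NN MM T) : 0 ≤ pbar P Q f χ χ' := by
  unfold pbar
  refine mul_nonneg (mul_nonneg ?_ (hP0 _ _)) (hQ0 _ _)
  split_ifs <;> norm_num

lemma Dop_posSemidef {NN MM T n : ℕ} [NeZero T] (P : Matrix (Fin NN) (Fin NN) ℝ)
    (Q : Matrix (Fin MM) (Fin MM) ℝ) (hP0 : ∀ i j, 0 ≤ P i j) (hQ0 : ∀ i j, 0 ≤ Q i j)
    (f : Fin MM → Bool) (R : XT NN MM T → Matrix (Fin n) (Fin n) ℝ)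
    (hR : ∀ χ, inX f χ → (R χ).PosSemidef) (χ : XT NN MM T) :
    (Dop P Q f R χ).PosSemidef := by
  unfold Dop
  refine Matrix.posSemidef_sum _ fun χ' _ => ?_
  split_ifs with h
  · exact (hR χ' h).smul (pbar_nonneg P Q hP0 hQ0 f χ' χ)
  · exact Matrix.PosSemidef.zero

lemma Dop_sub {NN MM T n : ℕ} [NeZero T] (P : Matrix (Fin NN) (Fin NN) ℝ)
    (Q : Matrix (Fin MM) (Fin MM) ℝ) (f : Fin MM → Bool)
    (R R' : XT NN MM T → Matrix (Fin n) (Fin n) ℝ) (χ : XT NN MM T) :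
    Dop P Q f R χ - Dop P Q f R' χ = Dop P Q f (fun χ => R χ - R' χ) χ := by
  unfold Dop
  rw [← Finset.sum_sub_distrib]
  refine Finset.sum_congr rfl fun χ' _ => ?_
  split_ifs <;> simp [smul_sub]

lemma isUnit_of_add_transpose {n : ℕ} (G : Matrix (Fin n) (Fin n) ℝ) (h : (G + Gᵀ).PosDef) :
    IsUnit G := by
  rw [← Matrix.mulVec_injective_iff_isUnit, ← Matrix.coe_mulVecLin,
    ← LinearMap.ker_eq_bot, LinearMap.ker_eq_bot']
  intro x hx
  by_contra hne
  have := h.dotProduct_mulVec_pos hne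
  simp only [Matrix.mulVecLin_apply] at hx
  rw [Matrix.add_mulVec, dotProduct_add, hx, Matrix.dotProduct_mulVec (star x) Gᵀ,
    Matrix.vecMul_transpose] at this
  simp [hx] at this

open Classical in
/-- the `H₂` LMIs imply invertibility of the `G_{γ,δ}` and, for
`K_{γ,δ} = F_{γ,δ} G_{γ,δ}⁻¹`, the existence of positive definite `Q_χ` with
`∑_χ tr(C_{K,χ} Q_χ C_{K,χ}ᵀ) < γ₀` and `Q_χ - D̄_χ(A_K Q A_Kᵀ + μ̄ E_K E_Kᵀ) > 0`. -/
theorem h2_lmi_matrix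
    {NN MM T n m q ℓ : ℕ} [NeZero NN] [NeZero MM] [NeZero T]
    [NeZero n] [NeZero m] [NeZero q] [NeZero ℓ]
    (P : Matrix (Fin NN) (Fin NN) ℝ) (Qm : Matrix (Fin MM) (Fin MM) ℝ)
    (hP0 : ∀ i j, 0 ≤ P i j) (hP1 : ∀ i, ∑ j, P i j = 1)
    (hQ0 : ∀ i j, 0 ≤ Qm i j) (hQ1 : ∀ i, ∑ j, Qm i j = 1)
    (f : Fin MM → Bool)
    (A : Fin NN → Matrix (Fin n) (Fin n) ℝ) (B : Fin NN → Matrix (Fin n) (Fin m) ℝ)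
    (C : Fin NN → Matrix (Fin ℓ) (Fin n) ℝ) (D : Fin NN → Matrix (Fin ℓ) (Fin m) ℝ)
    (E : Fin NN → Matrix (Fin n) (Fin q) ℝ)
    (γ₀ : ℝ) (hγ₀ : 0 < γ₀)
    (μbar : XT NN MM T → ℝ) (hμ0 : ∀ χ, 0 ≤ μbar χ)
    (hμsupp : ∀ χ, ¬ inX f χ → μbar χ = 0)
    (hμ1 : ∑ χ : XT NN MM T, μbar χ = 1)
    (W : XT NN MM T → Matrix (Fin ℓ) (Fin ℓ) ℝ)
    (hWsym : ∀ χ, inX f χ → (W χ).IsHermitian)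
    (R : XT NN MM T → Matrix (Fin n) (Fin n) ℝ)
    (hRsym : ∀ χ, inX f χ → (R χ).IsHermitian)
    (G : Fin NN → Fin T → Matrix (Fin n) (Fin n) ℝ)
    (F : Fin NN → Fin T → Matrix (Fin m) (Fin n) ℝ)
    (hLMI1 : ∀ χ : XT NN MM T, inX f χ →
      (Matrix.fromBlocks (R χ - μbar χ • (E χ.1 * (E χ.1)ᵀ))
        (A χ.1 * G χ.2.2.1 χ.2.2.2 + B χ.1 * F χ.2.2.1 χ.2.2.2)
        (A χ.1 * G χ.2.2.1 χ.2.2.2 + B χ.1 * F χ.2.2.1 χ.2.2.2)ᵀ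
        (G χ.2.2.1 χ.2.2.2 + (G χ.2.2.1 χ.2.2.2)ᵀ - Dop P Qm f R χ)).PosDef)
    (hLMI2 : ∀ χ : XT NN MM T, inX f χ →
      (Matrix.fromBlocks (W χ)
        (C χ.1 * G χ.2.2.1 χ.2.2.2 + D χ.1 * F χ.2.2.1 χ.2.2.2)
        (C χ.1 * G χ.2.2.1 χ.2.2.2 + D χ.1 * F χ.2.2.1 χ.2.2.2)ᵀ
        (G χ.2.2.1 χ.2.2.2 + (G χ.2.2.1 χ.2.2.2)ᵀ - Dop P Qm f R χ)).PosDef)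
    (htr : (∑ χ : XT NN MM T, if inX f χ then (W χ).trace else 0) < γ₀) :
    (∀ g d, Admissible f g d → IsUnit (G g d)) ∧
    ∀ K : Fin NN → Fin T → Matrix (Fin m) (Fin n) ℝ,
      (∀ g d, Admissible f g d → K g d = F g d * (G g d)⁻¹) →
      ∃ Qmat : XT NN MM T → Matrix (Fin n) (Fin n) ℝ,
        (∀ χ, inX f χ → (Qmat χ).PosDef) ∧
        (∑ χ : XT NN MM T, if inX f χ
            then (CKmat C D K χ * Qmat χ * (CKmat C D K χ)ᵀ).trace else 0) < γ₀ ∧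
        ∀ χ, inX f χ →
          (Qmat χ - Dop P Qm f
            (fun χ' => AKmat A B K χ' * Qmat χ' * (AKmat A B K χ')ᵀ
              + μbar χ' • (E χ'.1 * (E χ'.1)ᵀ)) χ).PosDef := by
  have hRpsd : ∀ χ, inX f χ → (R χ).PosSemidef := by
    intro χ h
    have h1 := (hLMI1 χ h).posSemidef.submatrix Sum.inl
    have h2 : (μbar χ • (E χ.1 * (E χ.1)ᴴ)).PosSemidef :=
      (Matrix.posSemidef_self_mul_conjTranspose (E χ.1)).smul (hμ0 χ)
    convert h1.add h2 using 1
    ext i j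
    simp [Matrix.conjTranspose_eq_transpose_of_trivial]
  have hS := Dop_posSemidef P Qm hP0 hQ0 f R hRpsd
  have hG : ∀ χ : XT NN MM T, inX f χ → IsUnit (G χ.2.2.1 χ.2.2.2) := by
    intro χ h
    apply isUnit_of_add_transpose
    have h1 := (hLMI1 χ h).submatrix (e := Sum.inr) Sum.inr_injective
    convert h1.add_posSemidef (hS χ) using 1
    ext i j
    simp
  refine ⟨fun g d ⟨α, β, h⟩ => hG (α, β, g, d) h, fun K hK => ?_⟩
  have hKG : ∀ χ : XT NN MM T, inX f χ →
      K χ.2.2.1 χ.2.2.2 * G χ.2.2.1 χ.2.2.2 = F χ.2.2.1 χ.2.2.2 := by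
    intro χ h
    rw [hK _ _ ⟨χ.1, χ.2.1, h⟩, Matrix.mul_assoc,
      Matrix.nonsing_inv_mul _ ((Matrix.isUnit_iff_isUnit_det _).1 (hG χ h)), Matrix.mul_one]
  have hex : ∀ χ : XT NN MM T, ∃ d : ℝ, 0 < d ∧ ∀ ε ≤ d, inX f χ →
      ((R χ - μbar χ • (E χ.1 * (E χ.1)ᵀ)) - AKmat A B K χ *
        (Dop P Qm f R χ + ε • (1 : Matrix (Fin n) (Fin n) ℝ)) * (AKmat A B K χ)ᵀ).PosSemidef ∧
      (W χ - CKmat C D K χ *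
        (Dop P Qm f R χ + ε • (1 : Matrix (Fin n) (Fin n) ℝ)) * (CKmat C D K χ)ᵀ).PosSemidef := by
    intro χ
    by_cases h : inX f χ
    · obtain ⟨d1, h1, h1'⟩ := posDef_shift (hLMI1 χ h)
      obtain ⟨d2, h2, h2'⟩ := posDef_shift (hLMI2 χ h)
      refine ⟨min d1 d2, lt_min h1 h2, fun ε hε _ => ⟨?_, ?_⟩⟩
      · refine schur_key _ (G χ.2.2.1 χ.2.2.2) _ _ d1 ε h1.le (hε.trans (min_le_left _ _)) ?_
        have : AKmat A B K χ * G χ.2.2.1 χ.2.2.2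
            = A χ.1 * G χ.2.2.1 χ.2.2.2 + B χ.1 * F χ.2.2.1 χ.2.2.2 := by
          rw [AKmat, Matrix.add_mul, Matrix.mul_assoc, hKG χ h]
        rw [this]
        exact h1'
      · refine schur_key _ (G χ.2.2.1 χ.2.2.2) _ _ d2 ε h2.le (hε.trans (min_le_right _ _)) ?_
        have : CKmat C D K χ * G χ.2.2.1 χ.2.2.2
            = C χ.1 * G χ.2.2.1 χ.2.2.2 + D χ.1 * F χ.2.2.1 χ.2.2.2 := by
          rw [CKmat, Matrix.add_mul, Matrix.mul_assoc, hKG χ h]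
        rw [this]
        exact h2'
    · exact ⟨1, one_pos, fun _ _ h' => absurd h' h⟩
  choose d hd0 hd using hex
  obtain ⟨χm, hm⟩ := Finite.exists_min d
  have hone : (d χm • (1 : Matrix (Fin n) (Fin n) ℝ)).PosDef := Matrix.PosDef.one.smul (hd0 χm)
  refine ⟨fun χ => Dop P Qm f R χ + d χm • (1 : Matrix (Fin n) (Fin n) ℝ), ?_, ?_, ?_⟩
  · intro χ h
    exact hone.posSemidef_add (hS χ)
  · refine lt_of_le_of_lt (Finset.sum_le_sum fun χ _ => ?_) htr
    split_ifs with h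
    · have := (hd χ (d χm) (hm χ) h).2.trace_nonneg
      rw [Matrix.trace_sub] at this
      linarith
    · exact le_rfl
  · intro χ h
    have h1 := Dop_posSemidef P Qm hP0 hQ0 f _
      (fun χ' h' => (hd χ' (d χm) (hm χ') h').1) χ
    have h2 : (fun χ' : XT NN MM T => (R χ' - μbar χ' • (E χ'.1 * (E χ'.1)ᵀ)) - AKmat A B K χ' *
        (Dop P Qm f R χ' + d χm • (1 : Matrix (Fin n) (Fin n) ℝ)) * (AKmat A B K χ')ᵀ)
        = fun χ' => R χ' - (AKmat A B K χ' *
        (Dop P Qm f R χ' + d χm • (1 : Matrix (Fin n) (Fin n) ℝ)) * (AKmat A B K χ')ᵀ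
          + μbar χ' • (E χ'.1 * (E χ'.1)ᵀ)) := by
      funext χ'
      abel
    rw [h2, ← Dop_sub] at h1
    convert hone.posSemidef_add h1 using 1
    exact add_sub_right_comm _ _ _

end
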